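/- Let P be a normal logic program over atoms a_1, …, a_n, let ⊗ be a t-norm and ⊕ a t-conorm, and let τ, φ, δ ∈ {0,1}^n be binary vectors. Let T = [τ], F = [φ], U the set induced by μ = (1−τ) ⊗ (1−φ) (componentwise), and φ' = φ + (μ ⊙ δ) (componentwise). Then: (i) [μ] = 𝒜 ∖ (T ∪ F); (ii) [φ'] = F ∪ (U ∩ [δ]); and (iii) if propagation computes the least fixpoint of 𝒞_{P,φ'} starting from τ, the induced true set equals C_{P,𝒜∖[φ']}^∞(T). Hence one binary NDProp update coincides with one (batch) DProp iteration. -/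

import Mathlib

instance : Fact ((0:ℝ) ≤ 1) := ⟨zero_le_one⟩

/-- A rule of a normal logic program: head atom, positive body atoms, default-negated body atoms. -/
structure Rule (α : Type) where
  head : α
  pos : Finset α
  neg : Finset α
deriving DecidableEq

/-- A t-norm on the unit interval: commutative, associative, monotone in each argument,
with unit `1`. -/
structure Tnorm where
  f : unitInterval → unitInterval → unitInterval
  comm : ∀ x y, f x y = f y x
  assoc : ∀ x y z, f (f x y) z = f x (f y z)
  mono : ∀ ⦃x x' y y'⦄, x ≤ x' → y ≤ y' → f x y ≤ f x' y'
  one_left : ∀ x, f 1 x = x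

/-- A t-conorm on the unit interval: commutative, associative, monotone in each argument,
with unit `0`. -/
structure Tconorm where
  f : unitInterval → unitInterval → unitInterval
  comm : ∀ x y, f x y = f y x
  assoc : ∀ x y z, f (f x y) z = f x (f y z)
  mono : ∀ ⦃x x' y y'⦄, x ≤ x' → y ≤ y' → f x y ≤ f x' y'
  zero_left : ∀ x, f 0 x = x

instance (t : Tnorm) : Std.Commutative t.f := ⟨t.comm⟩
instance (t : Tnorm) : Std.Associative t.f := ⟨t.assoc⟩
instance (s : Tconorm) : Std.Commutative s.f := ⟨s.comm⟩
instance (s : Tconorm) : Std.Associative s.f := ⟨s.assoc⟩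

/-- ⊗-product of `g` over a finite set (empty product = `1`). -/
def tnormProd {β : Type} (t : Tnorm) (g : β → unitInterval) (s : Finset β) : unitInterval :=
  s.fold t.f 1 g

/-- ⊕-sum of `g` over a finite set (empty sum = `0`). -/
def tconormSum {β : Type} (s : Tconorm) (g : β → unitInterval) (q : Finset β) : unitInterval :=
  q.fold s.f 0 g

/-- Support `ρ(τ,φ)` of a rule: the ⊗-product of the values of all its body literals,
where `val(a) = τ a` and `val(not a) = φ a`. -/
def support {α : Type} (t : Tnorm) (τ φ : α → unitInterval) (r : Rule α) : unitInterval :=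
  t.f (tnormProd t τ r.pos) (tnormProd t φ r.neg)

/-- The soft immediate consequence operator `𝒞_{P,φ}(τ)`: for each atom `a`, the ⊕-sum of
the supports of all rules with head `a`. -/
def softC {α : Type} [DecidableEq α] (t : Tnorm) (s : Tconorm) (P : Finset (Rule α))
    (φ τ : α → unitInterval) : α → unitInterval :=
  fun a => tconormSum s (support t τ φ) (P.filter fun r => r.head = a)

/-- The set induced by a degree vector: `[ψ] = { a | ψ a = 1 }`. -/
def induced {α : Type} (ψ : α → unitInterval) : Set α := { a | ψ a = 1 }

/-- The undecided degree `μ = (1 − τ) ⊗ (1 − φ)` (componentwise). -/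
def undec {α : Type} (t : Tnorm) (τ φ : α → unitInterval) : α → unitInterval :=
  fun a => t.f (unitInterval.symm (τ a)) (unitInterval.symm (φ a))

lemma tnormProd_mono {β : Type} [DecidableEq β] (t : Tnorm) {g g' : β → unitInterval}
    (h : ∀ b, g b ≤ g' b) (s : Finset β) :
    tnormProd t g s ≤ tnormProd t g' s := by
  induction s using Finset.induction_on with
  | empty => simp [tnormProd]
  | @insert a s ha ih =>
    rw [tnormProd, Finset.fold_insert ha, tnormProd, Finset.fold_insert ha]
    exact t.mono (h a) ih

lemma tconormSum_mono {β : Type} [DecidableEq β] (s : Tconorm) {g g' : β → unitInterval}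
    (h : ∀ b, g b ≤ g' b) (q : Finset β) :
    tconormSum s g q ≤ tconormSum s g' q := by
  induction q using Finset.induction_on with
  | empty => simp [tconormSum]
  | @insert a q ha ih =>
    rw [tconormSum, Finset.fold_insert ha, tconormSum, Finset.fold_insert ha]
    exact s.mono (h a) ih

lemma softC_mono {α : Type} [DecidableEq α] (t : Tnorm) (s : Tconorm)
    (P : Finset (Rule α)) (φ : α → unitInterval) :
    Monotone (softC t s P φ) := by
  intro τ τ' h a
  exact tconormSum_mono s
    (fun (r : Rule α) => t.mono (tnormProd_mono t (fun b => h b) r.pos) le_rfl) _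

/-- The least fixpoint of `𝒞_{P,φ}` above `τ` (propagation until convergence from `τ`). -/
noncomputable def softCInf {α : Type} [DecidableEq α] (t : Tnorm) (s : Tconorm)
    (P : Finset (Rule α)) (φ τ : α → unitInterval) : α → unitInterval :=
  OrderHom.lfp ⟨fun x => τ ⊔ softC t s P φ x,
    fun _ _ h => sup_le_sup_left (softC_mono t s P φ h) τ⟩

/-- The classical immediate consequence operator `C_{P,J}(I)`. -/
def imCons {α : Type} (P : Finset (Rule α)) (J I : Set α) : Set α :=
  { a | ∃ r ∈ P, r.head = a ∧ ↑r.pos ⊆ I ∧ ∀ b ∈ r.neg, b ∉ J }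

lemma imCons_mono {α : Type} (P : Finset (Rule α)) (J : Set α) : Monotone (imCons P J) := by
  rintro I I' h a ⟨r, hr, hh, hp, hn⟩
  exact ⟨r, hr, hh, fun x hx => h (hp hx), hn⟩

/-- `C_{P,J}^∞(I)`: the least fixpoint of `C_{P,J}` above `I`. -/
def imConsInf {α : Type} (P : Finset (Rule α)) (J I : Set α) : Set α :=
  OrderHom.lfp ⟨fun X => I ∪ imCons P J X,
    fun _ _ h => Set.union_subset_union (le_refl I) (imCons_mono P J h)⟩

lemma Tnorm.one_right (t : Tnorm) (x : unitInterval) : t.f x 1 = x := by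
  rw [t.comm, t.one_left]

lemma Tnorm.zero_left (t : Tnorm) (x : unitInterval) : t.f 0 x = 0 := by
  have h := t.mono (le_refl 0) (unitInterval.le_one' : x ≤ 1)
  rw [t.one_right] at h
  exact le_antisymm h unitInterval.nonneg'

lemma Tnorm.zero_right (t : Tnorm) (x : unitInterval) : t.f x 0 = 0 := by
  rw [t.comm, t.zero_left]

lemma Tconorm.one_left (s : Tconorm) (x : unitInterval) : s.f 1 x = 1 := by
  have h := s.mono (le_refl 1) (unitInterval.nonneg' : 0 ≤ x)
  rw [s.comm 1 0, s.zero_left] at h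
  exact le_antisymm unitInterval.le_one' h

lemma tnormProd_eq_one {β : Type} [DecidableEq β] (t : Tnorm) {g : β → unitInterval}
    (q : Finset β) (h : ∀ b ∈ q, g b = 1) : tnormProd t g q = 1 := by
  induction q using Finset.induction_on with
  | empty => simp [tnormProd]
  | @insert a q ha ih =>
    rw [tnormProd, Finset.fold_insert ha, h a (Finset.mem_insert_self _ _), t.one_left]
    exact ih fun b hb => h b (Finset.mem_insert_of_mem hb)

lemma tnormProd_eq_zero {β : Type} [DecidableEq β] (t : Tnorm) {g : β → unitInterval}
    {q : Finset β} {b : β} (hb : b ∈ q) (h : g b = 0) : tnormProd t g q = 0 := by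
  rw [← Finset.insert_erase hb, tnormProd, Finset.fold_insert (Finset.notMem_erase _ _), h,
    t.zero_left]

lemma tconormSum_eq_one {β : Type} [DecidableEq β] (s : Tconorm) {g : β → unitInterval}
    {q : Finset β} {b : β} (hb : b ∈ q) (h : g b = 1) : tconormSum s g q = 1 := by
  rw [← Finset.insert_erase hb, tconormSum, Finset.fold_insert (Finset.notMem_erase _ _), h,
    s.one_left]

lemma tconormSum_eq_zero {β : Type} [DecidableEq β] (s : Tconorm) {g : β → unitInterval}
    (q : Finset β) (h : ∀ b ∈ q, g b = 0) : tconormSum s g q = 0 := by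
  induction q using Finset.induction_on with
  | empty => simp [tconormSum]
  | @insert a q ha ih =>
    rw [tconormSum, Finset.fold_insert ha, h a (Finset.mem_insert_self _ _), s.zero_left]
    exact ih fun b hb => h b (Finset.mem_insert_of_mem hb)

lemma induced_softCInf {α : Type} [DecidableEq α] (t : Tnorm) (s : Tconorm)
    (P : Finset (Rule α)) (τ φ : α → unitInterval)
    (hτ : ∀ a, τ a = 0 ∨ τ a = 1) (hφ : ∀ a, φ a = 0 ∨ φ a = 1) :
    induced (softCInf t s P φ τ) = imConsInf P (Set.univ \ induced φ) (induced τ) := by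
  classical
  have hL : τ ⊔ softC t s P φ (softCInf t s P φ τ) = softCInf t s P φ τ :=
    OrderHom.map_lfp ⟨fun x => τ ⊔ softC t s P φ x,
      fun _ _ h => sup_le_sup_left (softC_mono t s P φ h) τ⟩
  have hX : induced τ ∪ imCons P (Set.univ \ induced φ)
      (imConsInf P (Set.univ \ induced φ) (induced τ)) =
      imConsInf P (Set.univ \ induced φ) (induced τ) :=
    OrderHom.map_lfp ⟨fun X => induced τ ∪ imCons P (Set.univ \ induced φ) X,
      fun _ _ h => Set.union_subset_union (le_refl _) (imCons_mono P _ h)⟩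
  have h1 : ∀ a, τ a ≤ softCInf t s P φ τ a := fun a => by
    have h : τ ≤ softCInf t s P φ τ := by
      conv_rhs => rw [← hL]
      exact le_sup_left
    exact h a
  have h2 : ∀ a, softC t s P φ (softCInf t s P φ τ) a ≤ softCInf t s P φ τ a := fun a => by
    have h : softC t s P φ (softCInf t s P φ τ) ≤ softCInf t s P φ τ := by
      conv_rhs => rw [← hL]
      exact le_sup_right
    exact h a
  apply Set.Subset.antisymm
  · generalize imConsInf P (Set.univ \ induced φ) (induced τ) = X at hX
    have key : softCInf t s P φ τ ≤ fun a => if a ∈ X then 1 else 0 := by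
      apply OrderHom.lfp_le
      apply sup_le
      · intro a
        by_cases ha : a ∈ X
        · simpa [ha] using unitInterval.le_one'
        · rcases hτ a with h | h
          · simp [ha, h]
          · exact absurd (hX ▸ Or.inl h) ha
      · intro a
        by_cases ha : a ∈ X
        · simpa [ha] using unitInterval.le_one'
        · simp only [ha, if_false]
          apply le_of_eq
          apply tconormSum_eq_zero
          intro r hr
          rw [Finset.mem_filter] at hr
          by_contra hne
          apply ha
          rw [← hX]
          refine Or.inr ⟨r, hr.1, hr.2, ?_, ?_⟩
          · intro b hb
            by_contra hbX
            apply hne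
            rw [support, tnormProd_eq_zero t (Finset.mem_coe.1 hb) (by simp [hbX]), t.zero_left]
          · intro b hb hbJ
            apply hne
            rw [support, tnormProd_eq_zero t (g := φ) hb ((hφ b).resolve_right hbJ.2),
              t.zero_right]
    intro a ha
    by_contra haX
    have h := key a
    have ha' : softCInf t s P φ τ a = 1 := ha
    rw [ha'] at h
    simp only [haX, if_false] at h
    exact absurd h (not_le.2 zero_lt_one)
  · apply OrderHom.lfp_le
    apply Set.union_subset
    · intro a ha
      have ha' : τ a = 1 := ha
      exact le_antisymm unitInterval.le_one' (ha' ▸ h1 a)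
    · rintro a ⟨r, hr, hh, hp, hn⟩
      have e : softC t s P φ (softCInf t s P φ τ) a = 1 := by
        apply tconormSum_eq_one s (b := r) (Finset.mem_filter.2 ⟨hr, hh⟩)
        rw [support, tnormProd_eq_one t _ (fun b hb => hp (Finset.mem_coe.2 hb)), t.one_left]
        apply tnormProd_eq_one
        intro b hb
        by_contra hne
        exact hn b hb ⟨trivial, hne⟩
      exact le_antisymm unitInterval.le_one' (e ▸ h2 a)

/-- For binary `τ, φ, δ` and `φ' = φ + (μ ⊙ δ)` with
`μ = (1−τ) ⊗ (1−φ)`: (i) `[μ] = 𝒜 ∖ ([τ] ∪ [φ])`; (ii) `[φ'] = [φ] ∪ ([μ] ∩ [δ])`;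
(iii) the set induced by the least fixpoint of `𝒞_{P,φ'}` above `τ` equals
`C_{P,𝒜∖[φ']}^∞([τ])`. Hence one binary NDProp update coincides with one (batch) DProp
iteration. -/
theorem crisp_ndprop_update_is_dprop_iteration {α : Type} [Fintype α] [DecidableEq α]
    (t : Tnorm) (s : Tconorm) (P : Finset (Rule α)) (τ φ δ φ' : α → unitInterval)
    (hτ : ∀ a, τ a = 0 ∨ τ a = 1) (hφ : ∀ a, φ a = 0 ∨ φ a = 1)
    (hδ : ∀ a, δ a = 0 ∨ δ a = 1)
    (hφ' : ∀ a, (φ' a : ℝ) = (φ a : ℝ) + (undec t τ φ a : ℝ) * (δ a : ℝ)) :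
    induced (undec t τ φ) = Set.univ \ (induced τ ∪ induced φ) ∧
    induced φ' = induced φ ∪ (induced (undec t τ φ) ∩ induced δ) ∧
    induced (softCInf t s P φ' τ) = imConsInf P (Set.univ \ induced φ') (induced τ) := by
  have hv : ∀ a, undec t τ φ a = if τ a = 0 ∧ φ a = 0 then 1 else 0 := by
    intro a
    rcases hτ a with h | h <;> rcases hφ a with h' | h' <;>
      simp [undec, h, h', t.one_left, t.zero_left]
  have hv' : ∀ a, φ' a = if φ a = 1 ∨ (τ a = 0 ∧ δ a = 1) then 1 else 0 := by
    intro a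
    apply Subtype.ext
    rw [hφ' a, hv a]
    rcases hτ a with h | h <;> rcases hφ a with h' | h' <;> rcases hδ a with h'' | h'' <;>
      simp [h, h', h'']
  refine ⟨?_, ?_, ?_⟩
  · ext a
    rcases hτ a with h | h <;> rcases hφ a with h' | h' <;> simp [induced, hv, h, h']
  · ext a
    rcases hτ a with h | h <;> rcases hφ a with h' | h' <;> rcases hδ a with h'' | h'' <;>
      simp [induced, hv, hv', h, h', h'']
  · apply induced_softCInf t s P τ φ' hτ
    intro a
    rw [hv' a]
    split_ifs <;> simp
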